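/- arXiv:2508.02465 — 2 statements merged into one kernel-verified Lean document; each statement's English description precedes it below -/
import Mathlib

section
/- Let C be a type and let f, g : Fin 4 → C be injective functions such that f k ≠ g k for every k : Fin 4. Then there exist distinct indices j, k : Fin 4 such that the four values f j, g j, f k, g k are pairwise distinct. -/
/-!
Fix `j`. Since `f` and `g` are injective, the conditions `k = j`, `f k = g j` and `g k = f j` each
hold for at most one `k`, so at least one of any four indices avoids all three.
-/

theorem exists_forall_notMem_of_subsingleton {κ α : Type*} {s : κ → Set α}
    (hs : ∀ i, (s i).Subsingleton) (hcard : ENat.card κ < ENat.card α) :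
    ∃ x, ∀ i, x ∉ s i := by
  by_contra! hcover
  choose i hi using hcover
  have hinj : Function.Injective i := fun x y hxy ↦ hs (i x) (hi x) (hxy ▸ hi y)
  exact hcard.not_ge (ENat.card_le_card_of_injective hinj)

theorem exists_ne_and_apply_ne_and_apply_ne {ι α β : Type*} {f : ι → α} {g : ι → β}
    (hf : Function.Injective f) (hg : Function.Injective g) (hι : 3 < ENat.card ι)
    (j : ι) (a : α) (b : β) :
    ∃ k, k ≠ j ∧ f k ≠ a ∧ g k ≠ b := by
  let s : Fin 3 → Set ι := ![{j}, f ⁻¹' {a}, g ⁻¹' {b}]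
  have hs : ∀ i, (s i).Subsingleton :=
    Fin.forall_fin_succ.2 ⟨Set.subsingleton_singleton, Fin.forall_fin_two.2
      ⟨Set.subsingleton_singleton.preimage hf, Set.subsingleton_singleton.preimage hg⟩⟩
  obtain ⟨k, hk⟩ := exists_forall_notMem_of_subsingleton hs (by simpa using hι)
  exact ⟨k, hk 0, hk 1, hk 2⟩

theorem rainbow_pair_extraction_general {ι C : Type*} {f g : ι → C}
    (hf : Function.Injective f) (hg : Function.Injective g) (hfg : ∀ k, f k ≠ g k)
    (hι : 3 < ENat.card ι) (j : ι) :
    ∃ k, j ≠ k ∧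
      f j ≠ g j ∧ f j ≠ f k ∧ f j ≠ g k ∧
      g j ≠ f k ∧ g j ≠ g k ∧ f k ≠ g k := by
  obtain ⟨k, hkj, hfk, hgk⟩ := exists_ne_and_apply_ne_and_apply_ne hf hg hι j (g j) (f j)
  exact ⟨k, hkj.symm, hfg j, hf.ne hkj.symm, hgk.symm, hfk.symm, hg.ne hkj.symm, hfg k⟩

/-- Combinatorial core of the rainbow-rectangle extraction: if `f, g : Fin 4 → C`
are injective and `f k ≠ g k` for each `k`, then some two indices `j ≠ k` give
four pairwise distinct values `f j, g j, f k, g k`. -/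
theorem rainbow_pair_extraction {C : Type*} (f g : Fin 4 → C)
    (hf : Function.Injective f) (hg : Function.Injective g)
    (hfg : ∀ k : Fin 4, f k ≠ g k) :
    ∃ j k : Fin 4, j ≠ k ∧
      f j ≠ g j ∧ f j ≠ f k ∧ f j ≠ g k ∧
      g j ≠ f k ∧ g j ≠ g k ∧ f k ≠ g k :=
  ⟨0, rainbow_pair_extraction_general hf hg hfg (by norm_num) 0⟩
end

section
/- Let E and F be real inner product spaces, let x > 0 be real, let u : Fin n → E satisfy dist (u k) (u l) = x for all k ≠ l, and let v : Fin m → F be injective such that there is exactly one unordered pair {i, j} of distinct indices with dist (v i) (v j) = x. Consider the points P (k, i) = (u k, v i) in the L² product space WithLp 2 (E × F). Then the number of unordered pairs of distinct index pairs {(k,i), (l,j)} with dist (P (k,i)) (P (l,j)) = x equals m · C(n, 2) + n. -/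
/-! In the distance graph of the product configuration two points are joined only if they differ
in exactly one coordinate: if they differ in both, the first coordinates alone already contribute
at least `x` and the second ones contribute something positive. So this graph is the box product of
the distance graphs of the factors, whose edges are counted by summing degrees. -/

open scoped ENNReal

section Graph

variable {V W : Type*}

theorem two_mul_ncard_edgeSet (G : SimpleGraph V) [Fintype V] [DecidableRel G.Adj] :
    2 * G.edgeSet.ncard = ∑ a, G.degree a := by
  rw [G.sum_degrees_eq_twice_card_edges, ← G.coe_edgeFinset, Set.ncard_coe_finset]

theorem ncard_edgeSet_boxProd [Finite V] [Finite W] (G : SimpleGraph V) (H : SimpleGraph W) :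
    (G □ H).edgeSet.ncard = Nat.card W * G.edgeSet.ncard + Nat.card V * H.edgeSet.ncard := by
  classical
  have := Fintype.ofFinite V
  have := Fintype.ofFinite W
  refine Nat.eq_of_mul_eq_mul_left two_pos ?_
  calc 2 * (G □ H).edgeSet.ncard
      = ∑ a : V, ∑ b : W, (G.degree a + H.degree b) := by
        simp only [two_mul_ncard_edgeSet, Fintype.sum_prod_type, SimpleGraph.degree_boxProd]
    _ = Nat.card W * ∑ a, G.degree a + Nat.card V * ∑ b, H.degree b := by
        simp [Finset.sum_add_distrib, Finset.mul_sum]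
    _ = 2 * (Nat.card W * G.edgeSet.ncard + Nat.card V * H.edgeSet.ncard) := by
        rw [← two_mul_ncard_edgeSet, ← two_mul_ncard_edgeSet]
        ring

theorem ncard_edgeSet_top [Finite V] :
    (⊤ : SimpleGraph V).edgeSet.ncard = (Nat.card V).choose 2 := by
  classical
  have := Fintype.ofFinite V
  rw [← SimpleGraph.coe_edgeFinset, Set.ncard_coe_finset,
    SimpleGraph.card_edgeFinset_top_eq_card_choose_two, Nat.card_eq_fintype_card]

theorem sym2_toFinset_injective [DecidableEq V] :
    Function.Injective (Sym2.toFinset : Sym2 V → Finset V) := fun a b h =>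
  Sym2.ext fun c => by rw [← Sym2.mem_toFinset, h, Sym2.mem_toFinset]

end Graph

section Segments

variable {ι X : Type*} [PseudoMetricSpace X]

/-- The graph on the index set of a family of points that joins two indices when their points are
at distance `x`. Adjacency asks for distinct indices because `x = 0` is allowed. -/
def distGraph (x : ℝ) (f : ι → X) : SimpleGraph ι where
  Adj i j := i ≠ j ∧ dist (f i) (f j) = x
  symm := ⟨fun i j h => ⟨h.1.symm, dist_comm (f i) (f j) ▸ h.2⟩⟩
  loopless := ⟨fun _ h => h.1 rfl⟩

/-- The segments of length `x` spanned by a family of points, each encoded as the two-element set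
of indices of its endpoints. -/
def segments [DecidableEq ι] (x : ℝ) (f : ι → X) : Set (Finset ι) :=
  {s | ∃ i j, i ≠ j ∧ s = {i, j} ∧ dist (f i) (f j) = x}

theorem image_toFinset_edgeSet_distGraph [DecidableEq ι] (x : ℝ) (f : ι → X) :
    Sym2.toFinset '' (distGraph x f).edgeSet = segments x f := by
  ext s
  simp only [Set.mem_image, Sym2.exists, SimpleGraph.mem_edgeSet, Sym2.toFinset_mk_eq,
    distGraph, segments, Set.mem_ofPred_eq, eq_comm (a := s)]
  exact exists₂_congr fun _ _ => and_right_comm.trans and_assoc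

theorem ncard_segments [DecidableEq ι] (x : ℝ) (f : ι → X) :
    (segments x f).ncard = (distGraph x f).edgeSet.ncard := by
  rw [← image_toFinset_edgeSet_distGraph, Set.ncard_image_of_injective _ sym2_toFinset_injective]

theorem ncard_segments_of_pairwise_dist_eq [Finite ι] [DecidableEq ι] {x : ℝ} {f : ι → X}
    (hf : Pairwise fun i j => dist (f i) (f j) = x) :
    (segments x f).ncard = (Nat.card ι).choose 2 := by
  have distGraph_eq_top : distGraph x f = ⊤ := by
    ext i j
    exact and_iff_left_of_imp (@hf i j)
  rw [ncard_segments, distGraph_eq_top, ncard_edgeSet_top]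

end Segments

section Product

variable {ι κ E F : Type*} [PseudoMetricSpace E] [PseudoMetricSpace F] {p : ℝ≥0∞} [Fact (1 ≤ p)]

theorem dist_toLp_of_snd_eq (hp : p ≠ ∞) (e e' : E) (f : F) :
    dist (WithLp.toLp p (e, f)) (WithLp.toLp p (e', f)) = dist e e' := by
  have p_pos : 0 < p.toReal := (ENNReal.toReal_pos_iff_ne_top p).mpr hp
  simp [WithLp.prod_dist_eq_add p_pos, p_pos.ne', Real.rpow_rpow_inv]

theorem dist_toLp_of_fst_eq (hp : p ≠ ∞) (e : E) (f f' : F) :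
    dist (WithLp.toLp p (e, f)) (WithLp.toLp p (e, f')) = dist f f' := by
  have p_pos : 0 < p.toReal := (ENNReal.toReal_pos_iff_ne_top p).mpr hp
  simp [WithLp.prod_dist_eq_add p_pos, p_pos.ne', Real.rpow_rpow_inv]

theorem dist_fst_lt_dist_toLp (hp : p ≠ ∞) (e e' : E) {f f' : F} (hf : 0 < dist f f') :
    dist e e' < dist (WithLp.toLp p (e, f)) (WithLp.toLp p (e', f')) := by
  have p_pos : 0 < p.toReal := (ENNReal.toReal_pos_iff_ne_top p).mpr hp
  rw [WithLp.prod_dist_eq_add p_pos, one_div, Real.lt_rpow_inv_iff_of_pos dist_nonneg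
    (by positivity) p_pos]
  exact lt_add_of_pos_right _ (Real.rpow_pos_of_pos hf _)

theorem distGraph_toLp_eq_boxProd (hp : p ≠ ∞) {x : ℝ} {u : ι → E} {v : κ → F}
    (hu : Pairwise fun k l => x ≤ dist (u k) (u l))
    (hv : Pairwise fun i j => 0 < dist (v i) (v j)) :
    distGraph x (fun a : ι × κ => WithLp.toLp p (u a.1, v a.2)) =
      distGraph x u □ distGraph x v := by
  ext ⟨k, i⟩ ⟨l, j⟩
  obtain rfl | hkl := eq_or_ne k l
  · simp [distGraph, SimpleGraph.boxProd_adj, dist_toLp_of_fst_eq hp]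
  obtain rfl | hij := eq_or_ne i j
  · simp [distGraph, SimpleGraph.boxProd_adj, dist_toLp_of_snd_eq hp]
  have dist_gt : x < dist (WithLp.toLp p (u k, v i)) (WithLp.toLp p (u l, v j)) :=
    (hu hkl).trans_lt (dist_fst_lt_dist_toLp hp _ _ (hv hij))
  simp [distGraph, SimpleGraph.boxProd_adj, hkl, hij, dist_gt.ne']

theorem card_segments_in_product_configuration_general [Finite ι] [Finite κ] [DecidableEq ι]
    [DecidableEq κ] (hp : p ≠ ∞) {x : ℝ} {u : ι → E} {v : κ → F}
    (hu : Pairwise fun k l => x ≤ dist (u k) (u l))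
    (hv : Pairwise fun i j => 0 < dist (v i) (v j)) :
    (segments x fun a : ι × κ => WithLp.toLp p (u a.1, v a.2)).ncard =
      Nat.card κ * (segments x u).ncard + Nat.card ι * (segments x v).ncard := by
  simp only [ncard_segments, distGraph_toLp_eq_boxProd hp hu hv, ncard_edgeSet_boxProd]

end Product

/-- Counting segments of length `x` in the product configuration: if `u` is a
regular simplex `S_n(x)` in `E` and `v` is an injective family in `F` with
exactly one unordered pair of distinct indices at distance `x`, then the number
of unordered pairs of product points at L²-distance `x` is `m·C(n,2) + n`. -/
theorem card_segments_in_product_configuration {E F : Type*}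
    [NormedAddCommGroup E] [InnerProductSpace ℝ E]
    [NormedAddCommGroup F] [InnerProductSpace ℝ F]
    {n m : ℕ} (x : ℝ) (hx : 0 < x)
    (u : Fin n → E) (hu : ∀ k l : Fin n, k ≠ l → dist (u k) (u l) = x)
    (v : Fin m → F) (hv : Function.Injective v)
    (hv1 : ∃! s : Finset (Fin m),
      ∃ i j : Fin m, i ≠ j ∧ s = {i, j} ∧ dist (v i) (v j) = x) :
    {s : Finset (Fin n × Fin m) | ∃ p q : Fin n × Fin m, p ≠ q ∧ s = {p, q} ∧
        dist ((WithLp.equiv 2 (E × F)).symm (u p.1, v p.2))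
          ((WithLp.equiv 2 (E × F)).symm (u q.1, v q.2)) = x}.ncard =
      m * Nat.choose n 2 + n := by
  have segments_u : (segments x u).ncard = n.choose 2 := by
    rw [ncard_segments_of_pairwise_dist_eq hu, Nat.card_fin]
  have segments_v : (segments x v).ncard = 1 :=
    Set.ncard_eq_one.mpr (Set.singleton_iff_unique_mem.mpr hv1)
  have h := card_segments_in_product_configuration_general (p := 2) (by simp)
    (fun k l hkl => (hu k l hkl).ge) (fun i j hij => dist_pos.mpr (hv.ne hij))
  rwa [segments_u, segments_v, Nat.card_fin, Nat.card_fin, mul_one] at h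
end
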